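/- arXiv:2507.10982 — 2 statements merged into one kernel-verified Lean document; each statement's English description precedes it below -/
import Mathlib

section
/- Let 1 ≤ p < q be integers and a, b ∈ ℤ with gcd(p,q) ∤ (b − a). Applying the construction with (α,β,γ,δ) = (p,a,q,b), the densities d_i exist for all i ∈ ℕ ∪ {∞}, with d_1 = 1 − 1/p − 1/q, d_2 = 1/p, d_i = 0 for every i ≥ 3, and d_∞ = 0; that is, d = (1 − 1/p − 1/q, 1/p, 0̄, 0). -/
open scoped BigOperators

noncomputable section

/-- The Beatty set `S(τ,η) = {⌊τk+η⌋ : k ∈ ℕ} ∩ ℕ`, viewed as a set of positive integers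
(inside `ℤ`).  Here `ℕ` denotes the positive integers, so `k` ranges over `k ≥ 1`. -/
def BeattySet (τ η : ℝ) : Set ℤ :=
  {x : ℤ | 0 < x ∧ ∃ k : ℕ, 0 < k ∧ ⌊τ * (k : ℝ) + η⌋ = x}

/-- The sets `A_i` (for `1 ≤ i < ∞`) associated to the data `(α,β,γ,δ)` and the map `f`
(which satisfies `f(⌊αk+β⌋) = ⌊γk+δ⌋` for `k ≥ 1`):
`A_1 = ℕ \ (S(α,β) ∪ S(γ,δ))`, and for `i ≥ 2`,
`A_i = {x ∈ S(α,β) \ S(γ,δ) : f^j(x) ∈ S(α,β) ∩ S(γ,δ) for 1 ≤ j ≤ i−2, and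
f^{i−1}(x) ∈ S(γ,δ) \ S(α,β)}`. -/
def ASet (α β γ δ : ℝ) (f : ℤ → ℤ) (i : ℕ) : Set ℤ :=
  if i = 1 then {x : ℤ | 0 < x} \ (BeattySet α β ∪ BeattySet γ δ)
  else (BeattySet α β \ BeattySet γ δ) ∩
    {x : ℤ | (∀ j : ℕ, 1 ≤ j → j ≤ i - 2 → f^[j] x ∈ BeattySet α β ∩ BeattySet γ δ) ∧
      f^[i - 1] x ∈ BeattySet γ δ \ BeattySet α β}

/-- The set `A_∞ = {x ∈ S(α,β) \ S(γ,δ) : f^j(x) ∈ S(α,β) ∩ S(γ,δ) for all j ≥ 1}`. -/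
def AInf (α β γ δ : ℝ) (f : ℤ → ℤ) : Set ℤ :=
  (BeattySet α β \ BeattySet γ δ) ∩
    {x : ℤ | ∀ j : ℕ, 1 ≤ j → f^[j] x ∈ BeattySet α β ∩ BeattySet γ δ}

/-- `A` has (Banach) density `d`: the limit of `|A ∩ [n₁,n₂]| / (n₂ − n₁)` as `n₂ − n₁ → ∞`
over intervals `[n₁,n₂]` of positive integers exists and equals `d`. -/
def HasBanachDensity (A : Set ℤ) (d : ℝ) : Prop :=
  ∀ ε : ℝ, 0 < ε → ∃ N : ℕ, ∀ n₁ n₂ : ℕ, 0 < n₁ → n₁ + N ≤ n₂ →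
    |((A ∩ Set.Icc (n₁ : ℤ) (n₂ : ℤ)).ncard : ℝ) / ((n₂ : ℝ) - (n₁ : ℝ)) - d| < ε

end

/-- `A` has bounded discrepancy with respect to density `d`. -/
def BDisc (A : Set ℤ) (d : ℝ) : Prop :=
  ∃ C : ℝ, ∀ n₁ n₂ : ℤ, 0 < n₁ → n₁ ≤ n₂ →
    |((A ∩ Set.Icc n₁ n₂).ncard : ℝ) - d * ((n₂ : ℝ) - n₁)| ≤ C

theorem BDisc.density {A : Set ℤ} {d : ℝ} (h : BDisc A d) : HasBanachDensity A d := by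
  obtain ⟨C, hC⟩ := h
  intro ε hε
  obtain ⟨N, hN⟩ := exists_nat_gt (C / ε)
  refine ⟨N + 1, fun n₁ n₂ h1 h2 => ?_⟩
  have h3 := hC n₁ n₂ (by omega) (by omega)
  have h4 : (n₁ : ℝ) + (N + 1) ≤ n₂ := by exact_mod_cast h2
  have hL : (0 : ℝ) < (n₂ : ℝ) - n₁ := by
    have : (0 : ℝ) ≤ N := Nat.cast_nonneg N
    linarith
  rw [div_lt_iff₀ hε] at hN
  simp only [Int.cast_natCast] at h3
  rw [div_sub' hL.ne', abs_div, abs_of_pos hL, div_lt_iff₀ hL]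
  rw [mul_comm _ d]
  refine h3.trans_lt (hN.trans_le ?_)
  rw [mul_comm]
  exact mul_le_mul_of_nonneg_left (by linarith) hε.le

theorem BDisc.congr {A B : Set ℤ} {d : ℝ} (h : BDisc A d) (M : ℤ)
    (hAB : ∀ x, M < x → 0 < x → (x ∈ A ↔ x ∈ B)) : BDisc B d := by
  obtain ⟨C, hC⟩ := h
  have key : ∀ A B : Set ℤ, (∀ x, M < x → 0 < x → (x ∈ A → x ∈ B)) → ∀ n₁ n₂ : ℤ, 0 < n₁ →
      ((A ∩ Set.Icc n₁ n₂).ncard : ℝ) ≤ (B ∩ Set.Icc n₁ n₂).ncard + (Set.Icc 1 M).ncard := by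
    intro A B hAB n₁ n₂ h1
    have hfin : (B ∩ Set.Icc n₁ n₂ ∪ Set.Icc 1 M).Finite :=
      ((Set.finite_Icc _ _).inter_of_right _).union (Set.finite_Icc _ _)
    have hsub : A ∩ Set.Icc n₁ n₂ ⊆ B ∩ Set.Icc n₁ n₂ ∪ Set.Icc 1 M := by
      rintro x ⟨hx, hx1, hx2⟩
      by_cases hM : M < x
      · exact Or.inl ⟨hAB x hM (by omega) hx, hx1, hx2⟩
      · exact Or.inr ⟨by omega, by omega⟩
    exact_mod_cast (Set.ncard_le_ncard hsub hfin).trans (Set.ncard_union_le _ _)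
  refine ⟨C + (Set.Icc 1 M).ncard, fun n₁ n₂ h1 h2 => ?_⟩
  have h3 := abs_le.1 (hC n₁ n₂ h1 h2)
  have h4 := key A B (fun x a b => (hAB x a b).1) n₁ n₂ h1
  have h5 := key B A (fun x a b => (hAB x a b).2) n₁ n₂ h1
  rw [abs_le]
  constructor <;> linarith [h3.1, h3.2]

theorem BDisc.union {A B : Set ℤ} {d e : ℝ} (hA : BDisc A d) (hB : BDisc B e)
    (hd : Disjoint A B) : BDisc (A ∪ B) (d + e) := by
  obtain ⟨C, hC⟩ := hA
  obtain ⟨D, hD⟩ := hB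
  refine ⟨C + D, fun n₁ n₂ h1 h2 => ?_⟩
  have h3 := abs_le.1 (hC n₁ n₂ h1 h2)
  have h4 := abs_le.1 (hD n₁ n₂ h1 h2)
  rw [Set.union_inter_distrib_right, Set.ncard_union_eq
    (hd.mono Set.inter_subset_left Set.inter_subset_left)
    ((Set.finite_Icc _ _).inter_of_right _) ((Set.finite_Icc _ _).inter_of_right _)]
  push_cast
  rw [abs_le]
  constructor <;> linarith [h3.1, h3.2, h4.1, h4.2]

theorem BDisc.compl {A : Set ℤ} {d : ℝ} (hA : BDisc A d) : BDisc Aᶜ (1 - d) := by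
  obtain ⟨C, hC⟩ := hA
  refine ⟨C + 1, fun n₁ n₂ h1 h2 => ?_⟩
  have h3 := abs_le.1 (hC n₁ n₂ h1 h2)
  have h4 : (A ∩ Set.Icc n₁ n₂).ncard + (Aᶜ ∩ Set.Icc n₁ n₂).ncard
      = (Set.Icc n₁ n₂).ncard := by
    rw [← Set.ncard_union_eq
      (disjoint_compl_right.mono Set.inter_subset_left Set.inter_subset_left)
      ((Set.finite_Icc _ _).inter_of_right _) ((Set.finite_Icc _ _).inter_of_right _),
      ← Set.union_inter_distrib_right, Set.union_compl_self, Set.univ_inter]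
  have h5 : (((Set.Icc n₁ n₂).ncard : ℤ) : ℝ) = ((n₂ + 1 - n₁ : ℤ) : ℝ) := by
    congr 1
    rw [← Finset.coe_Icc, Set.ncard_coe_finset, Int.card_Icc]
    omega
  have h6 : ((A ∩ Set.Icc n₁ n₂).ncard : ℝ) + (Aᶜ ∩ Set.Icc n₁ n₂).ncard
      = (Set.Icc n₁ n₂).ncard := by exact_mod_cast h4
  push_cast at h5
  rw [abs_le]
  constructor <;> linarith [h3.1, h3.2]

theorem BDisc.modEq (p : ℕ) (hp : 0 < p) (a : ℤ) :
    BDisc {x | x ≡ a [ZMOD p]} (1 / p) := by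
  refine ⟨2, fun n₁ n₂ h1 h2 => ?_⟩
  have e : {x | x ≡ a [ZMOD p]} ∩ Set.Icc n₁ n₂ =
      ((Finset.Ioc (n₁ - 1) n₂).filter (fun x => x ≡ a [ZMOD p]) : Finset ℤ) := by
    ext x
    simp only [Set.mem_inter_iff, Set.mem_ofPred_eq, Set.mem_Icc, Finset.coe_filter,
      Finset.mem_Ioc]
    constructor
    · rintro ⟨h, hu, hv⟩
      exact ⟨⟨by omega, by omega⟩, h⟩
    · rintro ⟨⟨hu, hv⟩, h⟩
      exact ⟨h, by omega, by omega⟩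
  have hp0 : (0 : ℚ) < p := by exact_mod_cast hp
  have hcard := Int.Ioc_filter_modEq_card (n₁ - 1) n₂ (r := (p : ℤ)) (by omega) a
  rw [e, Set.ncard_coe_finset]
  rw [max_eq_left] at hcard
  · set c := (Finset.filter (fun x => x ≡ a [ZMOD p]) (Finset.Ioc (n₁ - 1) n₂)).card
    have hq : (c : ℚ) = (⌊((n₂ : ℚ) - a) / ((p : ℤ) : ℚ)⌋ : ℚ)
        - (⌊(((n₁ - 1 : ℤ) : ℚ) - a) / ((p : ℤ) : ℚ)⌋ : ℚ) := by exact_mod_cast hcard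
    have f1 := Int.floor_le (((n₂ : ℚ) - a) / ((p : ℤ) : ℚ))
    have f2 := Int.lt_floor_add_one (((n₂ : ℚ) - a) / ((p : ℤ) : ℚ))
    have f3 := Int.floor_le ((((n₁ - 1 : ℤ) : ℚ) - a) / ((p : ℤ) : ℚ))
    have f4 := Int.lt_floor_add_one ((((n₁ - 1 : ℤ) : ℚ) - a) / ((p : ℤ) : ℚ))
    have g : ((n₂ : ℚ) - a) / ((p : ℤ) : ℚ) - (((n₁ - 1 : ℤ) : ℚ) - a) / ((p : ℤ) : ℚ)
        = 1 / p * ((n₂ : ℚ) - n₁) + 1 / p := by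
      push_cast
      ring
    have g1 : (1 : ℚ) / p ≤ 1 := by
      rw [div_le_one hp0]
      exact_mod_cast hp
    have g2 : (0 : ℚ) < 1 / p := by positivity
    have : |(c : ℚ) - 1 / p * ((n₂ : ℚ) - n₁)| ≤ 2 := by
      rw [abs_le]
      constructor <;> linarith
    have hu : ((|(c : ℚ) - 1 / p * ((n₂ : ℚ) - n₁)| : ℚ) : ℝ) ≤ ((2 : ℚ) : ℝ) :=
      Rat.cast_le.2 this
    push_cast at hu
    exact hu
  · rw [sub_nonneg]
    apply Int.floor_le_floor
    have : ((n₁ - 1 : ℤ) : ℚ) ≤ n₂ := by exact_mod_cast (by omega : n₁ - 1 ≤ n₂)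
    have hp1 : (0 : ℚ) ≤ ((p : ℤ) : ℚ) := by exact_mod_cast hp.le
    gcongr

theorem BDisc.empty : BDisc ∅ 0 := ⟨0, fun n₁ n₂ _ _ => by simp⟩

theorem floor_int_lin (p k : ℕ) (a : ℤ) : ⌊(p : ℝ) * (k : ℝ) + (a : ℝ)⌋ = p * k + a := by
  rw [Int.floor_eq_iff]
  push_cast
  constructor <;> linarith

theorem mem_beatty (p : ℕ) (a x : ℤ) :
    x ∈ BeattySet (p : ℝ) (a : ℝ) ↔ 0 < x ∧ ∃ k : ℕ, 0 < k ∧ (p : ℤ) * k + a = x := by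
  simp only [BeattySet, Set.mem_ofPred_eq, floor_int_lin]

theorem beatty_modEq {p : ℕ} {a x : ℤ} (h : x ∈ BeattySet (p : ℝ) (a : ℝ)) :
    x ≡ a [ZMOD p] := by
  obtain ⟨_, k, _, rfl⟩ := (mem_beatty p a x).1 h
  simp [Int.ModEq]

theorem mem_beatty_large {p : ℕ} (hp : 0 < p) {a x : ℤ} (h0 : 0 < x) (hx : a < x) :
    x ∈ BeattySet (p : ℝ) (a : ℝ) ↔ x ≡ a [ZMOD p] := by
  refine ⟨beatty_modEq, fun h => (mem_beatty p a x).2 ⟨h0, ?_⟩⟩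
  obtain ⟨k, hk⟩ := h.symm.dvd
  have hk0 : 0 < k := by
    have : (0 : ℤ) < p * k := by omega
    exact (mul_pos_iff_of_pos_left (by omega)).1 this
  refine ⟨k.toNat, by omega, ?_⟩
  rw [Int.toNat_of_nonneg hk0.le]
  omega

/-- **Corollary, region ⟨8⟩.** Let `1 ≤ p < q` be integers and `a, b ∈ ℤ`
with `gcd(p,q) ∤ (b − a)`.  With `(α,β,γ,δ) = (p,a,q,b)`, the densities exist, with
`d_1 = 1 − 1/p − 1/q`, `d_2 = 1/p`, `d_i = 0` for `i ≥ 3`, and `d_∞ = 0`. -/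
theorem densities_integer_case_eight (p q : ℕ) (hp : 1 ≤ p) (hpq : p < q) (a b : ℤ)
    (hndvd : ¬ ((Nat.gcd p q : ℤ) ∣ (b - a))) (f : ℤ → ℤ)
    (hf : ∀ k : ℕ, 0 < k →
      f ⌊(p : ℝ) * (k : ℝ) + (a : ℝ)⌋ = ⌊(q : ℝ) * (k : ℝ) + (b : ℝ)⌋) :
    HasBanachDensity (ASet (p : ℝ) (a : ℝ) (q : ℝ) (b : ℝ) f 1)
        (1 - 1 / (p : ℝ) - 1 / (q : ℝ)) ∧
      HasBanachDensity (ASet (p : ℝ) (a : ℝ) (q : ℝ) (b : ℝ) f 2) (1 / (p : ℝ)) ∧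
      (∀ i : ℕ, 3 ≤ i → HasBanachDensity (ASet (p : ℝ) (a : ℝ) (q : ℝ) (b : ℝ) f i) 0) ∧
      HasBanachDensity (AInf (p : ℝ) (a : ℝ) (q : ℝ) (b : ℝ) f) 0 := by
  have hq : 0 < q := by omega
  have hdis : ∀ x : ℤ, x ≡ a [ZMOD p] → ¬ x ≡ b [ZMOD q] := by
    intro x h1 h2
    apply hndvd
    have d1 : (Nat.gcd p q : ℤ) ∣ a - x :=
      (Int.natCast_dvd_natCast.2 (Nat.gcd_dvd_left p q)).trans h1.dvd
    have d2 : (Nat.gcd p q : ℤ) ∣ b - x :=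
      (Int.natCast_dvd_natCast.2 (Nat.gcd_dvd_right p q)).trans h2.dvd
    have := dvd_sub d2 d1
    rwa [sub_sub_sub_cancel_right] at this
  have hno : ∀ x : ℤ, x ∉ BeattySet (p : ℝ) (a : ℝ) ∩ BeattySet (q : ℝ) (b : ℝ) :=
    fun x hx => hdis x (beatty_modEq hx.1) (beatty_modEq hx.2)
  refine ⟨?_, ?_, ?_, ?_⟩
  · apply BDisc.density
    have h := ((BDisc.modEq p hp a).union (BDisc.modEq q hq b)
      (Set.disjoint_left.2 fun x h1 h2 => hdis x h1 h2)).compl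
    rw [← sub_sub] at h
    refine h.congr (max a b) fun x hM h0 => ?_
    have h1 := mem_beatty_large hp h0 (lt_of_le_of_lt (le_max_left a b) hM)
    have h2 := mem_beatty_large hq h0 (lt_of_le_of_lt (le_max_right a b) hM)
    simp [ASet, h1, h2, h0]
  · apply BDisc.density
    -- beyond this bound, `x = p k + a` forces `k > |b|`, so that `q k + b > 0`
    refine (BDisc.modEq p hp a).congr (a + p * |b|) fun x hM h0 => ?_
    have hpb : (0 : ℤ) ≤ p * |b| := by positivity
    have h1 := mem_beatty_large hp h0 (a := a) (by omega)
    constructor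
    · intro hx
      have hxS := h1.2 hx
      obtain ⟨_, k, hk, rfl⟩ := (mem_beatty p a x).1 hxS
      have hfk := hf k hk
      rw [floor_int_lin, floor_int_lin] at hfk
      have hkb : |b| < (k : ℤ) := by
        have : (p : ℤ) * |b| < p * k := by omega
        exact lt_of_mul_lt_mul_left this (by omega)
      have hpos : 0 < (q : ℤ) * k + b := by
        have : (k : ℤ) ≤ q * k := le_mul_of_one_le_left (by omega) (by omega)
        have := neg_abs_le b
        omega
      have hmem : (q : ℤ) * k + b ∈ BeattySet (q : ℝ) (b : ℝ) :=
        (mem_beatty q b _).2 ⟨hpos, k, hk, rfl⟩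
      simp only [ASet]
      rw [if_neg (by norm_num)]
      refine ⟨⟨hxS, fun h => hno _ ⟨hxS, h⟩⟩, fun j h1 h2 => by omega, ?_⟩
      simp only [Nat.add_one_sub_one, Function.iterate_one]
      rw [hfk]
      exact ⟨hmem, fun h => hno _ ⟨h, hmem⟩⟩
    · intro hx
      simp only [ASet] at hx
      rw [if_neg (by norm_num)] at hx
      exact beatty_modEq hx.1.1
  · intro i hi
    have : ASet (p : ℝ) (a : ℝ) (q : ℝ) (b : ℝ) f i = ∅ := by
      rw [Set.eq_empty_iff_forall_notMem]
      intro x hx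
      simp only [ASet] at hx
      rw [if_neg (by omega)] at hx
      exact hno _ (hx.2.1 1 le_rfl (by omega))
    rw [this]
    exact BDisc.empty.density
  · have : AInf (p : ℝ) (a : ℝ) (q : ℝ) (b : ℝ) f = ∅ := by
      rw [Set.eq_empty_iff_forall_notMem]
      intro x hx
      exact hno _ (hx.2 1 le_rfl)
    rw [this]
    exact BDisc.empty.density
end

section
/- Let 1 < p < q be integers and a, b ∈ ℤ with gcd(p,q) | (b − a), and write p = p₁·gcd(p,q), q = q₁·gcd(p,q). Suppose p₁ > 1. Applying the construction with (α,β,γ,δ) = (p,a,q,b), the densities d_i exist for all i ∈ ℕ ∪ {∞}, with d_1 = 1 − 1/p − 1/q + 1/(gcd(p,q)·p₁·q₁), d_i = (q₁ − 1)(p₁ − 1)/(q₁·p·p₁^{i−1}) for every finite i ≥ 2, and d_∞ = 0. -/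
open scoped BigOperators

/-- the count of a set in an interval -/
theorem bd_fin (A : Set ℤ) (m n : ℤ) : (A ∩ Set.Icc m n).Finite :=
  (Set.finite_Icc m n).subset Set.inter_subset_right

theorem bd_of_bounded (A : Set ℤ) (d C : ℝ)
    (h : ∀ n₁ n₂ : ℕ, 0 < n₁ → n₁ < n₂ →
      |((A ∩ Set.Icc (n₁ : ℤ) (n₂ : ℤ)).ncard : ℝ) - d * ((n₂ : ℝ) - (n₁ : ℝ))| ≤ C) :
    HasBanachDensity A d := by
  intro ε hε
  obtain ⟨N, hN⟩ := exists_nat_gt (C / ε)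
  refine ⟨N + 1, fun n₁ n₂ h1 h2 => ?_⟩
  have h3 : n₁ < n₂ := by omega
  have h4 : (N : ℝ) + 1 ≤ (n₂ : ℝ) - n₁ := by
    have : ((n₁ + (N + 1) : ℕ) : ℝ) ≤ n₂ := by exact_mod_cast h2
    push_cast at this; linarith
  have hN0 : (0 : ℝ) ≤ N := Nat.cast_nonneg N
  have h5 : (0 : ℝ) < (n₂ : ℝ) - n₁ := by linarith
  have h6 := h n₁ n₂ h1 h3
  have h7 : ((A ∩ Set.Icc (n₁ : ℤ) (n₂ : ℤ)).ncard : ℝ) / ((n₂ : ℝ) - (n₁ : ℝ)) - d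
      = (((A ∩ Set.Icc (n₁ : ℤ) (n₂ : ℤ)).ncard : ℝ) - d * ((n₂ : ℝ) - (n₁ : ℝ))) /
        ((n₂ : ℝ) - (n₁ : ℝ)) := by field_simp
  rw [h7, abs_div, abs_of_pos h5, div_lt_iff₀ h5]
  rw [div_lt_iff₀ hε] at hN
  nlinarith

theorem bd_ap (m : ℤ) (hm : 0 < m) (r : ℤ) :
    HasBanachDensity {x : ℤ | m ∣ x - r} (1 / (m : ℝ)) := by
  apply bd_of_bounded _ _ 2
  intro n₁ n₂ h1 h2
  have e : ({x : ℤ | m ∣ x - r} ∩ Set.Icc (n₁ : ℤ) (n₂ : ℤ)).ncard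
      = ((Finset.Ioc ((n₁ : ℤ) - 1) n₂).filter (fun x => x ≡ r [ZMOD m])).card := by
    rw [← Set.ncard_coe_finset]
    congr 1
    ext x
    simp only [Set.mem_inter_iff, Set.mem_ofPred_eq, Set.mem_Icc, Finset.coe_filter, Finset.mem_Ioc]
    rw [Int.modEq_comm, Int.modEq_iff_dvd]
    constructor
    · rintro ⟨h, h', h''⟩; exact ⟨⟨by omega, h''⟩, h⟩
    · rintro ⟨⟨h', h''⟩, h⟩; exact ⟨h, by omega, h''⟩
  rw [e]
  have e2 := Int.Ioc_filter_modEq_card ((n₁ : ℤ) - 1) n₂ hm r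
  set c := ((Finset.Ioc ((n₁ : ℤ) - 1) n₂).filter (fun x => x ≡ r [ZMOD m])).card
  set u : ℚ := ((n₂ : ℤ) - r) / m with hu
  set v : ℚ := (((n₁ : ℤ) - 1 : ℤ) - r) / m with hv
  have hmQ : (0 : ℚ) < m := by exact_mod_cast hm
  have hm1 : (1 : ℚ) ≤ m := by exact_mod_cast hm
  have huv : u - v = (1 / (m : ℚ)) * ((n₂ : ℚ) - n₁) + 1 / m := by
    rw [hu, hv]; push_cast; field_simp; ring
  have hn : (0 : ℚ) < (n₂ : ℚ) - n₁ := by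
    have : (n₁ : ℚ) < n₂ := by exact_mod_cast h2
    linarith
  have hm2 : 1 / (m : ℚ) ≤ 1 := by rw [div_le_one hmQ]; exact hm1
  have hm3 : 0 < 1 / (m : ℚ) := by positivity
  have hpos : v ≤ u := by nlinarith [mul_pos hm3 hn]
  have hfl : ⌊v⌋ ≤ ⌊u⌋ := Int.floor_le_floor hpos
  rw [max_eq_left (by simpa using hfl)] at e2
  have e3 : (c : ℚ) = (⌊u⌋ : ℚ) - ⌊v⌋ := by exact_mod_cast e2
  have key : |(c : ℚ) - (1 / (m : ℚ)) * ((n₂ : ℚ) - n₁)| ≤ 2 := by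
    rw [abs_le]
    have := Int.floor_le u
    have := Int.lt_floor_add_one u
    have := Int.floor_le v
    have := Int.lt_floor_add_one v
    constructor <;> linarith
  have key2 := (Rat.cast_le (K := ℝ)).2 key
  push_cast at key2
  exact key2

theorem bd_sdiff {A B : Set ℤ} {x y : ℝ} (hA : HasBanachDensity A x) (hB : HasBanachDensity B y)
    (h : B ⊆ A) : HasBanachDensity (A \ B) (x - y) := by
  intro ε hε
  obtain ⟨N, hN⟩ := hA (ε / 2) (by linarith)
  obtain ⟨N', hN'⟩ := hB (ε / 2) (by linarith)
  refine ⟨max N N', fun n₁ n₂ h1 h2 => ?_⟩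
  have h3 := hN n₁ n₂ h1 (by have := le_max_left N N'; omega)
  have h4 := hN' n₁ n₂ h1 (by have := le_max_right N N'; omega)
  have e : (((A \ B) ∩ Set.Icc (n₁ : ℤ) (n₂ : ℤ)).ncard : ℝ) =
      ((A ∩ Set.Icc (n₁ : ℤ) (n₂ : ℤ)).ncard : ℝ) - ((B ∩ Set.Icc (n₁ : ℤ) (n₂ : ℤ)).ncard : ℝ) := by
    have e1 : (A \ B) ∩ Set.Icc (n₁ : ℤ) (n₂ : ℤ) =
      (A ∩ Set.Icc (n₁ : ℤ) (n₂ : ℤ)) \ (B ∩ Set.Icc (n₁ : ℤ) (n₂ : ℤ)) := by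
      ext z; simp only [Set.mem_inter_iff, Set.mem_sdiff]; tauto
    have := Set.ncard_sdiff_add_ncard_of_subset
      (Set.inter_subset_inter_left (Set.Icc (n₁ : ℤ) (n₂ : ℤ)) h) (bd_fin A n₁ n₂)
    rw [e1, ← this]; push_cast; ring
  rw [e, sub_div]
  rw [abs_lt] at *
  constructor <;> linarith

theorem bd_ncard_le {A B : Set ℤ} {M : ℕ} (h : ∀ x : ℤ, (M : ℤ) < x → x ∈ A → x ∈ B)
    (n₁ n₂ : ℕ) (h1 : 0 < n₁) :
    ((A ∩ Set.Icc (n₁ : ℤ) (n₂ : ℤ)).ncard : ℝ) ≤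
      ((B ∩ Set.Icc (n₁ : ℤ) (n₂ : ℤ)).ncard : ℝ) + M := by
  have e : A ∩ Set.Icc (n₁ : ℤ) (n₂ : ℤ) ⊆
      (B ∩ Set.Icc (n₁ : ℤ) (n₂ : ℤ)) ∪ Set.Icc (1 : ℤ) M := by
    rintro x ⟨hx, hx'⟩
    by_cases hM : (M : ℤ) < x
    · exact Or.inl ⟨h x hM hx, hx'⟩
    · right; rw [Set.mem_Icc] at *; omega
  have e1 := Set.ncard_le_ncard e ((bd_fin B n₁ n₂).union (Set.finite_Icc _ _))
  have e2 := Set.ncard_union_le (B ∩ Set.Icc (n₁ : ℤ) (n₂ : ℤ)) (Set.Icc (1 : ℤ) M)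
  have e3 : (Set.Icc (1 : ℤ) M).ncard = M := by
    rw [← Finset.coe_Icc, Set.ncard_coe_finset]; simp
  rw [e3] at e2
  exact_mod_cast e1.trans e2

theorem bd_upper {A B : Set ℤ} {M : ℕ} (h : ∀ x : ℤ, (M : ℤ) < x → x ∈ A → x ∈ B)
    (ε : ℝ) (hε : 0 < ε) : ∃ N : ℕ, ∀ n₁ n₂ : ℕ, 0 < n₁ → n₁ + N ≤ n₂ →
      ((A ∩ Set.Icc (n₁ : ℤ) (n₂ : ℤ)).ncard : ℝ) / ((n₂ : ℝ) - (n₁ : ℝ)) <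
      ((B ∩ Set.Icc (n₁ : ℤ) (n₂ : ℤ)).ncard : ℝ) / ((n₂ : ℝ) - (n₁ : ℝ)) + ε := by
  obtain ⟨N, hN⟩ := exists_nat_gt ((M : ℝ) / ε)
  refine ⟨N + 1, fun n₁ n₂ h1 h2 => ?_⟩
  have h4 : (N : ℝ) + 1 ≤ (n₂ : ℝ) - n₁ := by
    have : ((n₁ + (N + 1) : ℕ) : ℝ) ≤ n₂ := by exact_mod_cast h2
    push_cast at this; linarith
  have hN0 : (0 : ℝ) ≤ N := Nat.cast_nonneg N
  have h5 : (0 : ℝ) < (n₂ : ℝ) - n₁ := by linarith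
  have h6 := bd_ncard_le h n₁ n₂ h1
  rw [div_lt_iff₀ hε] at hN
  rw [div_lt_iff₀ h5, add_mul, div_mul_cancel₀ _ h5.ne']
  nlinarith

theorem bd_congr {A B : Set ℤ} {M : ℕ} (h : ∀ x : ℤ, (M : ℤ) < x → (x ∈ A ↔ x ∈ B)) {d : ℝ}
    (hB : HasBanachDensity B d) : HasBanachDensity A d := by
  intro ε hε
  obtain ⟨N, hN⟩ := hB (ε / 2) (by linarith)
  obtain ⟨N1, hN1⟩ := bd_upper (fun x hx => (h x hx).1) (ε / 2) (by linarith)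
  obtain ⟨N2, hN2⟩ := bd_upper (fun x hx => (h x hx).2) (ε / 2) (by linarith)
  refine ⟨N + N1 + N2, fun n₁ n₂ h1 h2 => ?_⟩
  have a1 := hN n₁ n₂ h1 (by omega)
  have a2 := hN1 n₁ n₂ h1 (by omega)
  have a3 := hN2 n₁ n₂ h1 (by omega)
  rw [abs_lt] at *
  constructor <;> linarith

theorem bd_zero {A : Set ℤ} {M : ℕ} (B : ℕ → Set ℤ) (d : ℕ → ℝ)
    (h : ∀ j, ∀ x : ℤ, (M : ℤ) < x → x ∈ A → x ∈ B j)
    (hB : ∀ j, HasBanachDensity (B j) (d j)) (hd : ∀ ε : ℝ, 0 < ε → ∃ j, d j < ε) :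
    HasBanachDensity A 0 := by
  intro ε hε
  obtain ⟨j, hj⟩ := hd (ε / 3) (by linarith)
  obtain ⟨N, hN⟩ := hB j (ε / 3) (by linarith)
  obtain ⟨N1, hN1⟩ := bd_upper (h j) (ε / 3) (by linarith)
  refine ⟨N + N1, fun n₁ n₂ h1 h2 => ?_⟩
  have a1 := hN n₁ n₂ h1 (by omega)
  have a2 := hN1 n₁ n₂ h1 (by omega)
  have h5 : (0 : ℝ) ≤ (n₂ : ℝ) - n₁ := by
    have : (n₁ : ℝ) ≤ n₂ := by exact_mod_cast (by omega : n₁ ≤ n₂)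
    linarith
  have : 0 ≤ ((A ∩ Set.Icc (n₁ : ℤ) (n₂ : ℤ)).ncard : ℝ) / ((n₂ : ℝ) - (n₁ : ℝ)) := by positivity
  rw [abs_lt] at *
  constructor <;> linarith

/-- `n` further steps of the map are possible from index `k`. -/
def StepQ (p₁ q₁ c : ℤ) : ℕ → ℤ → Prop
  | 0, _ => True
  | n + 1, k => ∃ k', q₁ * k + c = p₁ * k' ∧ StepQ p₁ q₁ c n k'

theorem stepQ_mono (p₁ q₁ c : ℤ) (n : ℕ) : ∀ k, StepQ p₁ q₁ c (n + 1) k → StepQ p₁ q₁ c n k := by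
  induction n with
  | zero => intro k _; trivial
  | succ n ih => rintro k ⟨k', h, h'⟩; exact ⟨k', h, ih k' h'⟩

theorem stepQ_class (p₁ q₁ c : ℤ) (hp : 0 < p₁) (hc : IsCoprime p₁ q₁) (n : ℕ) :
    ∃ s, ∀ k, StepQ p₁ q₁ c n k ↔ p₁ ^ n ∣ k - s := by
  induction n with
  | zero => exact ⟨0, fun k => by simp [StepQ]⟩
  | succ n ih =>
    obtain ⟨s, hs⟩ := ih
    have hc' : IsCoprime (p₁ ^ (n + 1)) q₁ := hc.pow_left
    obtain ⟨u, v, huv⟩ := hc'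
    refine ⟨v * (p₁ * s - c), fun k => ?_⟩
    have e1 : StepQ p₁ q₁ c (n + 1) k ↔ p₁ ^ (n + 1) ∣ q₁ * k + c - p₁ * s := by
      constructor
      · rintro ⟨k', h, h'⟩
        obtain ⟨t, ht⟩ := (hs k').1 h'
        exact ⟨t, by rw [h, pow_succ]; linear_combination p₁ * ht⟩
      · rintro ⟨t, ht⟩
        refine ⟨s + p₁ ^ n * t, ?_, (hs _).2 ⟨t, by ring⟩⟩
        rw [pow_succ] at ht; linear_combination ht
    rw [e1]
    constructor
    · rintro ⟨t, ht⟩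
      exact ⟨v * t + u * k, by linear_combination v * ht - k * huv⟩
    · rintro ⟨t, ht⟩
      exact ⟨q₁ * t - u * (p₁ * s - c), by linear_combination q₁ * ht + (p₁ * s - c) * huv⟩

/-- the class of `x = p k + a` from which `n` further steps are possible -/
def ClassC (p a p₁ q₁ c : ℤ) (n : ℕ) : Set ℤ := {x | ∃ k, x = p * k + a ∧ StepQ p₁ q₁ c n k}

theorem classC_bd (p a p₁ q₁ c : ℤ) (hp0 : 0 < p) (hp : 0 < p₁) (hc : IsCoprime p₁ q₁) (n : ℕ) :
    HasBanachDensity (ClassC p a p₁ q₁ c n) (1 / ((p : ℝ) * (p₁ : ℝ) ^ n)) := by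
  obtain ⟨s, hs⟩ := stepQ_class p₁ q₁ c hp hc n
  have e : ClassC p a p₁ q₁ c n = {x | p * p₁ ^ n ∣ x - (p * s + a)} := by
    ext x
    simp only [ClassC, Set.mem_ofPred_eq]
    constructor
    · rintro ⟨k, rfl, hk⟩
      obtain ⟨t, ht⟩ := (hs k).1 hk
      exact ⟨t, by linear_combination p * ht⟩
    · rintro ⟨t, ht⟩
      exact ⟨s + p₁ ^ n * t, by linear_combination ht, (hs _).2 ⟨t, by ring⟩⟩
  rw [e]
  have := bd_ap (p * p₁ ^ n) (by positivity) (p * s + a)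
  push_cast at this
  exact this

theorem classCD_bd (p q a b g p₁ q₁ c : ℤ) (hg : 0 < g) (hpg : p = p₁ * g) (hqg : q = q₁ * g)
    (hb : b - a = g * c) (hp : 0 < p₁) (hq : 0 < q₁) (hc : IsCoprime p₁ q₁) (n : ℕ) :
    HasBanachDensity (ClassC p a p₁ q₁ c n ∩ {x | q ∣ x - b})
      (1 / ((p : ℝ) * (p₁ : ℝ) ^ n * (q₁ : ℝ))) := by
  obtain ⟨s, hs⟩ := stepQ_class p₁ q₁ c hp hc n
  obtain ⟨u, v, huv⟩ := hc
  obtain ⟨u', v', huv'⟩ : IsCoprime (p₁ ^ n) q₁ := IsCoprime.pow_left ⟨u, v, huv⟩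
  obtain ⟨w, hw⟩ : ∃ w, w = s * (v' * q₁) + (u * c) * (u' * p₁ ^ n) := ⟨_, rfl⟩
  have e : ClassC p a p₁ q₁ c n ∩ {x | q ∣ x - b} =
      {x | p * p₁ ^ n * q₁ ∣ x - (p * w + a)} := by
    ext x
    simp only [ClassC, Set.mem_ofPred_eq, Set.mem_inter_iff]
    constructor
    · rintro ⟨⟨k, rfl, hk⟩, ⟨t', ht'⟩⟩
      have h1 : p₁ ^ n ∣ k - w := by
        obtain ⟨t, ht⟩ := (hs k).1 hk
        exact ⟨t + s * u' - u * c * u', by rw [hw]; linear_combination ht - s * huv'⟩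
      have h2 : q₁ ∣ k - w := by
        have h3 : p₁ * k - c = q₁ * t' := by
          apply mul_left_cancel₀ hg.ne'
          rw [hpg, hqg] at ht'
          linear_combination ht' + hb
        exact ⟨u * t' + v * k - s * v' + u * c * v', by
          rw [hw]; linear_combination u * h3 - k * huv - u * c * huv'⟩
      obtain ⟨t, ht⟩ := (IsCoprime.mul_dvd ⟨u', v', huv'⟩ h1 h2)
      exact ⟨t, by linear_combination p * ht⟩
    · rintro ⟨t, ht⟩
      refine ⟨⟨w + p₁ ^ n * q₁ * t, by linear_combination ht, (hs _).2 ?_⟩, ?_⟩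
      · exact ⟨q₁ * t - s * u' + u * c * u', by rw [hw]; linear_combination s * huv'⟩
      · refine ⟨p₁ * p₁ ^ n * t + p₁ * (s * v' - u * c * v') - v * c, ?_⟩
        rw [hw, hpg] at ht
        rw [hqg]
        linear_combination ht - hb + p₁ * g * u * c * huv' + g * c * huv
  rw [e]
  have hp0 : 0 < p := by rw [hpg]; positivity
  have := bd_ap (p * p₁ ^ n * q₁) (by positivity) (p * w + a)
  push_cast at this
  exact this

theorem beatty_int (p : ℕ) (a x : ℤ) :
    x ∈ BeattySet (p : ℝ) (a : ℝ) ↔ 0 < x ∧ ∃ k : ℤ, 0 < k ∧ x = p * k + a := by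
  have e : ∀ k : ℕ, ⌊(p : ℝ) * (k : ℝ) + (a : ℝ)⌋ = (p : ℤ) * k + a := by
    intro k
    have : (p : ℝ) * (k : ℝ) + (a : ℝ) = (((p : ℤ) * k + a : ℤ) : ℝ) := by push_cast; ring
    rw [this, Int.floor_intCast]
  simp only [BeattySet, Set.mem_ofPred_eq, e]
  refine and_congr_right fun _ => ⟨?_, ?_⟩
  · rintro ⟨k, hk, rfl⟩; exact ⟨k, by exact_mod_cast hk, rfl⟩
  · rintro ⟨k, hk, rfl⟩
    lift k to ℕ using hk.le
    exact ⟨k, by exact_mod_cast hk, rfl⟩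

theorem beatty_large (p : ℕ) (hp : 0 < p) (a x : ℤ) (hx : |a| < x) :
    x ∈ BeattySet (p : ℝ) (a : ℝ) ↔ (p : ℤ) ∣ x - a := by
  rw [beatty_int]
  have h0 := abs_nonneg a
  have h1 := le_abs_self a
  constructor
  · rintro ⟨_, k, _, rfl⟩; exact ⟨k, by ring⟩
  · rintro ⟨k, hk⟩
    refine ⟨by omega, k, ?_, by linarith⟩
    have hp' : (0 : ℤ) < p := by exact_mod_cast hp
    have : 0 < (p : ℤ) * k := by omega
    exact pos_of_mul_pos_right this hp'.le

theorem orbit_char (p q : ℕ) (hp : 1 < p) (hpq : p < q) (a b g p₁ q₁ c : ℤ) (hg : 0 < g)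
    (hpg : (p : ℤ) = p₁ * g) (hqg : (q : ℤ) = q₁ * g) (hb : b - a = g * c) (f : ℤ → ℤ)
    (hf : ∀ k : ℤ, 0 < k → f (p * k + a) = q * k + b) (n : ℕ) :
    ∀ k : ℤ, |a| + |b| < k →
      ((∀ j : ℕ, 1 ≤ j → j ≤ n →
        f^[j] (p * k + a) ∈ BeattySet (p : ℝ) (a : ℝ) ∩ BeattySet (q : ℝ) (b : ℝ)) ↔
        StepQ p₁ q₁ c n k) ∧
      (((∀ j : ℕ, 1 ≤ j → j ≤ n →
        f^[j] (p * k + a) ∈ BeattySet (p : ℝ) (a : ℝ) ∩ BeattySet (q : ℝ) (b : ℝ)) ∧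
        f^[n + 1] (p * k + a) ∈ BeattySet (q : ℝ) (b : ℝ) \ BeattySet (p : ℝ) (a : ℝ)) ↔
        (StepQ p₁ q₁ c n k ∧ ¬ StepQ p₁ q₁ c (n + 1) k)) := by
  have hp' : (1 : ℤ) < p := by exact_mod_cast hp
  have hpq' : (p : ℤ) + 1 ≤ q := by exact_mod_cast hpq
  have a1 := abs_nonneg a
  have a2 := le_abs_self a
  have a3 := neg_abs_le a
  have b1 := abs_nonneg b
  have b2 := le_abs_self b
  have b3 := neg_abs_le b
  have hpos : ∀ k : ℤ, |a| + |b| < k → 0 < (q : ℤ) * k + b := by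
    intro k hk; nlinarith
  have hSq : ∀ k : ℤ, |a| + |b| < k → (q : ℤ) * k + b ∈ BeattySet (q : ℝ) (b : ℝ) := by
    intro k hk
    rw [beatty_int]
    exact ⟨hpos k hk, k, by omega, rfl⟩
  have hlin : ∀ k k' : ℤ, (q : ℤ) * k + b = p * k' + a ↔ q₁ * k + c = p₁ * k' := by
    intro k k'
    rw [hpg, hqg]
    constructor
    · intro h
      apply mul_left_cancel₀ hg.ne'
      linear_combination h - hb
    · intro h
      linear_combination g * h + hb
  have hbig : ∀ k k' : ℤ, |a| + |b| < k → (q : ℤ) * k + b = p * k' + a → k ≤ k' := by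
    intro k k' hk h
    have : (p : ℤ) * k ≤ p * k' := by nlinarith
    exact le_of_mul_le_mul_left this (by omega)
  have hSp : ∀ k : ℤ, |a| + |b| < k → ((q : ℤ) * k + b ∈ BeattySet (p : ℝ) (a : ℝ) ↔
      ∃ k', q₁ * k + c = p₁ * k') := by
    intro k hk
    rw [beatty_int]
    constructor
    · rintro ⟨_, k', _, h⟩; exact ⟨k', (hlin k k').1 h⟩
    · rintro ⟨k', h⟩
      have h' := (hlin k k').2 h
      exact ⟨hpos k hk, k', by have := hbig k k' hk h'; omega, h'⟩
  have hinj : ∀ k k' k'' : ℤ, q₁ * k + c = p₁ * k' → q₁ * k + c = p₁ * k'' → k' = k'' := by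
    intro k k' k'' h h'
    have h0 : p₁ ≠ 0 := by rintro rfl; simp at hpg; omega
    exact mul_left_cancel₀ h0 (h.symm.trans h')
  induction n with
  | zero =>
    intro k hk
    have hk0 : 0 < k := by omega
    refine ⟨by simp only [StepQ, iff_true]; intros; omega, ?_⟩
    have : (∀ j : ℕ, 1 ≤ j → j ≤ 0 →
        f^[j] (p * k + a) ∈ BeattySet (p : ℝ) (a : ℝ) ∩ BeattySet (q : ℝ) (b : ℝ)) := by
      intros; omega
    simp only [zero_add, Function.iterate_one, hf k hk0, StepQ, and_true,
      Set.mem_sdiff, hSq k hk, hSp k hk, true_and]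
    exact and_iff_right this
  | succ n ih =>
    intro k hk
    have hk0 : 0 < k := by omega
    have hsplit : (∀ j : ℕ, 1 ≤ j → j ≤ n + 1 →
        f^[j] (p * k + a) ∈ BeattySet (p : ℝ) (a : ℝ) ∩ BeattySet (q : ℝ) (b : ℝ)) ↔
        (∃ k', q₁ * k + c = p₁ * k') ∧ (∀ j : ℕ, 1 ≤ j → j ≤ n →
        f^[j] (q * k + b) ∈ BeattySet (p : ℝ) (a : ℝ) ∩ BeattySet (q : ℝ) (b : ℝ)) := by
      constructor
      · intro h
        refine ⟨?_, fun j h1 h2 => ?_⟩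
        · have := (h 1 le_rfl (by omega)).1
          rwa [Function.iterate_one, hf k hk0, hSp k hk] at this
        · have := h (j + 1) (by omega) (by omega)
          rwa [Function.iterate_succ_apply, hf k hk0] at this
      · rintro ⟨h1, h2⟩ j hj hj'
        obtain ⟨i, rfl⟩ : ∃ i, j = i + 1 := ⟨j - 1, by omega⟩
        rw [Function.iterate_succ_apply, hf k hk0]
        rcases Nat.eq_zero_or_pos i with rfl | hi
        · exact ⟨(hSp k hk).2 h1, hSq k hk⟩
        · exact h2 i hi (by omega)
    have hstep : f^[n + 1 + 1] (p * k + a) = f^[n + 1] (q * k + b) := by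
      rw [Function.iterate_succ_apply, hf k hk0]
    rw [hsplit, hstep]
    by_cases hex : ∃ k', q₁ * k + c = p₁ * k'
    · obtain ⟨k', hk'⟩ := hex
      have h' := (hlin k k').2 hk'
      have hge := hbig k k' hk h'
      have hQ : ∀ m, StepQ p₁ q₁ c (m + 1) k ↔ StepQ p₁ q₁ c m k' := by
        intro m
        constructor
        · rintro ⟨k'', e, e'⟩; rwa [hinj k k' k'' hk' e]
        · intro e; exact ⟨k', hk', e⟩
      rw [hQ n, hQ (n + 1), h']
      have hex : ∃ k', q₁ * k + c = p₁ * k' := ⟨k', hk'⟩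
      simp only [hex, true_and]
      exact ih k' (by omega)
    · have hQ : ∀ m, ¬ StepQ p₁ q₁ c (m + 1) k := by
        rintro m ⟨k', e, _⟩; exact hex ⟨k', e⟩
      simp only [hex, hQ, false_and]
      exact ⟨trivial, trivial⟩


/-- **Corollary, region ⟨10⟩.** Let `1 < p < q` be integers, `a, b ∈ ℤ` with
`gcd(p,q) ∣ (b − a)`, and write `p = p₁·gcd(p,q)`, `q = q₁·gcd(p,q)` with `p₁ > 1`.
With `(α,β,γ,δ) = (p,a,q,b)`, the densities exist, with
`d_1 = 1 − 1/p − 1/q + 1/(gcd(p,q)·p₁·q₁)`,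
`d_i = (q₁ − 1)(p₁ − 1)/(q₁·p·p₁^{i−1})` for every finite `i ≥ 2`, and `d_∞ = 0`. -/
theorem densities_integer_case_ten (p q : ℕ) (hp : 1 < p) (hpq : p < q) (a b : ℤ)
    (hdvd : ((Nat.gcd p q : ℤ) ∣ (b - a))) (p₁ q₁ : ℕ)
    (hp₁ : p = p₁ * Nat.gcd p q) (hq₁ : q = q₁ * Nat.gcd p q) (hp₁gt : 1 < p₁)
    (f : ℤ → ℤ)
    (hf : ∀ k : ℕ, 0 < k →
      f ⌊(p : ℝ) * (k : ℝ) + (a : ℝ)⌋ = ⌊(q : ℝ) * (k : ℝ) + (b : ℝ)⌋) :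
    HasBanachDensity (ASet (p : ℝ) (a : ℝ) (q : ℝ) (b : ℝ) f 1)
        (1 - 1 / (p : ℝ) - 1 / (q : ℝ) +
          1 / ((Nat.gcd p q : ℝ) * (p₁ : ℝ) * (q₁ : ℝ))) ∧
      (∀ i : ℕ, 2 ≤ i →
        HasBanachDensity (ASet (p : ℝ) (a : ℝ) (q : ℝ) (b : ℝ) f i)
          (((q₁ : ℝ) - 1) * ((p₁ : ℝ) - 1) / ((q₁ : ℝ) * (p : ℝ) * (p₁ : ℝ) ^ (i - 1)))) ∧
      HasBanachDensity (AInf (p : ℝ) (a : ℝ) (q : ℝ) (b : ℝ) f) 0 := by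
  have hg : 0 < Nat.gcd p q := Nat.gcd_pos_of_pos_left _ (by omega)
  have hcopN : Nat.Coprime p₁ q₁ := by
    have h1 : Nat.gcd (p₁ * Nat.gcd p q) (q₁ * Nat.gcd p q) = Nat.gcd p q := by
      rw [← hp₁, ← hq₁]
    rw [Nat.gcd_mul_right] at h1
    exact Nat.eq_of_mul_eq_mul_right hg (by rw [h1, one_mul])
  have hcop : IsCoprime (p₁ : ℤ) (q₁ : ℤ) := Nat.isCoprime_iff_coprime.2 hcopN
  generalize Nat.gcd p q = g at *
  obtain ⟨c, hc⟩ := hdvd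
  have hpg : (p : ℤ) = p₁ * g := by exact_mod_cast hp₁
  have hqg : (q : ℤ) = q₁ * g := by exact_mod_cast hq₁
  have hq₁0 : 0 < q₁ := by
    rcases Nat.eq_zero_or_pos q₁ with h | h
    · rw [h] at hq₁; omega
    · exact h
  have hgZ : (0 : ℤ) < g := by exact_mod_cast hg
  have hp₁Z : (0 : ℤ) < p₁ := by exact_mod_cast (by omega : 0 < p₁)
  have hq₁Z : (0 : ℤ) < q₁ := by exact_mod_cast hq₁0
  have hpZ : (0 : ℤ) < p := by exact_mod_cast (by omega : 0 < p)
  have hqZ : (0 : ℤ) < q := by exact_mod_cast (by omega : 0 < q)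
  have hf' : ∀ k : ℤ, 0 < k → f (p * k + a) = q * k + b := by
    intro k hk
    lift k to ℕ using hk.le
    have := hf k (by exact_mod_cast hk)
    have e1 : (p : ℝ) * (k : ℝ) + (a : ℝ) = (((p : ℤ) * k + a : ℤ) : ℝ) := by push_cast; ring
    have e2 : (q : ℝ) * (k : ℝ) + (b : ℝ) = (((q : ℤ) * k + b : ℤ) : ℝ) := by push_cast; ring
    rwa [e1, e2, Int.floor_intCast, Int.floor_intCast] at this
  have horb := orbit_char p q hp hpq a b g p₁ q₁ c hgZ hpg hqg hc f hf'
  obtain ⟨M, hM⟩ : ∃ M : ℕ, (M : ℤ) = p * (|a| + |b|) + |a| + |b| :=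
    ⟨(p * (|a| + |b|) + |a| + |b|).toNat, Int.toNat_of_nonneg (by positivity)⟩
  have hMa : ∀ x : ℤ, (M : ℤ) < x → |a| < x := by
    intro x hx
    have : 0 ≤ (p : ℤ) * (|a| + |b|) := by positivity
    have := abs_nonneg b
    omega
  have hMb : ∀ x : ℤ, (M : ℤ) < x → |b| < x := by
    intro x hx
    have : 0 ≤ (p : ℤ) * (|a| + |b|) := by positivity
    have := abs_nonneg a
    omega
  have hMk : ∀ k : ℤ, (M : ℤ) < p * k + a → |a| + |b| < k := by
    intro k hk
    have := le_abs_self a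
    have := abs_nonneg b
    have : (p : ℤ) * (|a| + |b|) < p * k := by linarith
    exact lt_of_mul_lt_mul_left this hpZ.le
  have hSa : ∀ x : ℤ, (M : ℤ) < x → (x ∈ BeattySet (p : ℝ) (a : ℝ) ↔ (p : ℤ) ∣ x - a) :=
    fun x hx => beatty_large p (by omega) a x (hMa x hx)
  have hSb : ∀ x : ℤ, (M : ℤ) < x → (x ∈ BeattySet (q : ℝ) (b : ℝ) ↔ (q : ℤ) ∣ x - b) :=
    fun x hx => beatty_large q (by omega) b x (hMb x hx)
  set D : Set ℤ := {x | (q : ℤ) ∣ x - b} with hD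
  set C : ℕ → Set ℤ := ClassC p a p₁ q₁ c with hC
  have hC0 : ∀ x, x ∈ C 0 ↔ (p : ℤ) ∣ x - a := by
    intro x
    constructor
    · rintro ⟨k, rfl, _⟩; exact ⟨k, by ring⟩
    · rintro ⟨k, hk⟩; exact ⟨k, by linarith, trivial⟩
  have hCQ : ∀ n (k : ℤ), (p : ℤ) * k + a ∈ C n ↔ StepQ p₁ q₁ c n k := by
    intro n k
    constructor
    · rintro ⟨k', e, h⟩
      have : k = k' := by
        apply mul_left_cancel₀ hpZ.ne'
        linarith
      rwa [this]
    · intro h; exact ⟨k, rfl, h⟩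
  have hE : ∀ n, HasBanachDensity (C n \ (C n ∩ D))
      (1 / ((p : ℝ) * (p₁ : ℝ) ^ n) - 1 / ((p : ℝ) * (p₁ : ℝ) ^ n * (q₁ : ℝ))) := by
    intro n
    have h1 := classC_bd p a p₁ q₁ c hpZ hp₁Z hcop n
    have h2 := classCD_bd p q a b g p₁ q₁ c hgZ hpg hqg hc hp₁Z hq₁Z hcop n
    have h3 := bd_sdiff h1 h2 Set.inter_subset_left
    simpa only [Int.cast_natCast] using h3
  have hpR : (p : ℝ) = p₁ * g := by exact_mod_cast hp₁
  have hgR : (0 : ℝ) < g := by exact_mod_cast hg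
  have hp₁R : (1 : ℝ) < p₁ := by exact_mod_cast hp₁gt
  have hp₁R0 : (0 : ℝ) < p₁ := by linarith
  have hq₁R : (0 : ℝ) < q₁ := by exact_mod_cast hq₁0
  have hpR0 : (1 : ℝ) < p := by exact_mod_cast hp
  refine ⟨?_, ?_, ?_⟩
  · have hu : HasBanachDensity Set.univ 1 := by
      have := bd_ap 1 one_pos 0
      simpa using this
    have hDd : HasBanachDensity D (1 / (q : ℝ)) := by
      have := bd_ap q hqZ b
      simpa only [Int.cast_natCast] using this
    have h1 := bd_sdiff (bd_sdiff hu hDd (Set.subset_univ _)) (hE 0) (by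
      intro x hx
      exact ⟨trivial, fun h => hx.2 ⟨hx.1, h⟩⟩)
    have h2 : (1 - 1 / (p : ℝ) - 1 / (q : ℝ) + 1 / ((g : ℝ) * (p₁ : ℝ) * (q₁ : ℝ))) =
        1 - 1 / (q : ℝ) -
          (1 / ((p : ℝ) * (p₁ : ℝ) ^ 0) - 1 / ((p : ℝ) * (p₁ : ℝ) ^ 0 * (q₁ : ℝ))) := by
      rw [hpR, pow_zero, mul_one, mul_comm (g : ℝ)]; ring
    rw [h2]
    refine bd_congr (M := M) ?_ h1
    intro x hx
    have hx0 : 0 < x := by omega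
    have hD' : x ∈ D ↔ (q : ℤ) ∣ x - b := Iff.rfl
    have hpos : x ∈ {x : ℤ | 0 < x} := hx0
    simp only [ASet, if_true, Set.mem_sdiff, Set.mem_union, hSa x hx, hSb x hx, hC0,
      Set.mem_inter_iff, hD', Set.mem_univ, hpos]
    tauto
  · intro i hi
    obtain ⟨n, rfl⟩ : ∃ n, i = n + 2 := ⟨i - 2, by omega⟩
    have h1 := bd_sdiff (hE n) (hE (n + 1)) (by
      rintro x ⟨⟨k, e, hk⟩, hx⟩
      exact ⟨⟨k, e, stepQ_mono _ _ _ _ _ hk⟩, fun h => hx ⟨⟨k, e, hk⟩, h.2⟩⟩)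
    have h2 : (((q₁ : ℝ) - 1) * ((p₁ : ℝ) - 1) /
          ((q₁ : ℝ) * (p : ℝ) * (p₁ : ℝ) ^ (n + 2 - 1))) =
        (1 / ((p : ℝ) * (p₁ : ℝ) ^ n) - 1 / ((p : ℝ) * (p₁ : ℝ) ^ n * (q₁ : ℝ))) -
        (1 / ((p : ℝ) * (p₁ : ℝ) ^ (n + 1)) - 1 / ((p : ℝ) * (p₁ : ℝ) ^ (n + 1) * (q₁ : ℝ))) := by
      rw [show n + 2 - 1 = n + 1 by omega, pow_succ]
      have : (p : ℝ) ≠ 0 := by linarith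
      field_simp
    rw [h2]
    refine bd_congr (M := M) ?_ h1
    intro x hx
    have hD' : x ∈ D ↔ (q : ℤ) ∣ x - b := Iff.rfl
    rw [ASet, if_neg (by omega), show n + 2 - 2 = n by omega, show n + 2 - 1 = n + 1 by omega]
    by_cases hxa : (p : ℤ) ∣ x - a
    · obtain ⟨k, hk⟩ := hxa
      obtain rfl : x = p * k + a := by linarith
      have hkk := hMk k hx
      have h3 := (horb n k hkk).2
      have h4 : (p : ℤ) ∣ p * k + a - a := ⟨k, by ring⟩
      rw [Set.mem_inter_iff, Set.mem_sdiff, hSa _ hx, hSb _ hx, Set.mem_ofPred_eq, h3]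
      simp only [Set.mem_sdiff, Set.mem_inter_iff, hCQ, hD', h4, true_and]
      tauto
    · have h5 : x ∉ C n := by
        rintro ⟨k, rfl, _⟩; exact hxa ⟨k, by ring⟩
      simp only [Set.mem_inter_iff, Set.mem_sdiff, hSa _ hx, hxa, h5, false_and]
  · refine bd_zero (M := M) (fun n => C n \ (C n ∩ D)) _ ?_ hE ?_
    · rintro n x hx ⟨⟨h1, h2⟩, h3⟩
      rw [hSa x hx] at h1
      rw [hSb x hx] at h2
      obtain ⟨k, hk⟩ := h1
      obtain rfl : x = p * k + a := by linarith
      have hkk := hMk k hx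
      exact ⟨(hCQ n k).2 ((horb n k hkk).1.1 fun j hj _ => h3 j hj), fun h => h2 h.2⟩
    · intro ε hε
      obtain ⟨n, hn⟩ := exists_pow_lt_of_lt_one hε (inv_lt_one_of_one_lt₀ hp₁R)
      refine ⟨n, ?_⟩
      have h1 : 0 < 1 / ((p : ℝ) * (p₁ : ℝ) ^ n * (q₁ : ℝ)) := by positivity
      have h2 : 1 / ((p : ℝ) * (p₁ : ℝ) ^ n) ≤ (p₁ : ℝ)⁻¹ ^ n := by
        rw [inv_pow, ← one_div]
        apply one_div_le_one_div_of_le (by positivity)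
        have : 0 < (p₁ : ℝ) ^ n := by positivity
        nlinarith
      linarith
end
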